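/- Let n ≥ 3 and let T ⊆ ZMod n. There exists an annular link state p on ZMod n such that {i, i + 1} is a part of p for every i ∈ T, if and only if T is innermost. -/

import Mathlib

/-- The open cyclic interval `(a, b)` in `ZMod n`:
the set `{a + k : k ∈ ℕ, 0 < k < (b − a).val}`. -/
def cycInt (n : ℕ) (a b : ZMod n) : Set (ZMod n) :=
  {x | ∃ k : ℕ, 0 < k ∧ k < (b - a).val ∧ x = a + (k : ZMod n)}

/-- An annular link state on `ZMod n`: a partition of `ZMod n` (a collection of
pairwise disjoint nonempty subsets covering `ZMod n`) all of whose parts have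
cardinality 1 or 2, such that for every part `{i, j}` of cardinality 2: no part of
cardinality 2 has one element in `(i,j)` and one in `(j,i)`; and either every
singleton part is contained in `(i,j)` or every singleton part is contained in
`(j,i)`. -/
structure AnnularLinkState (n : ℕ) where
  parts : Set (Set (ZMod n))
  parts_nonempty : ∀ p ∈ parts, p.Nonempty
  parts_disjoint : ∀ p ∈ parts, ∀ q ∈ parts, p ≠ q → Disjoint p q
  parts_cover : ∀ x : ZMod n, ∃ p ∈ parts, x ∈ p
  parts_card : ∀ p ∈ parts, p.ncard = 1 ∨ p.ncard = 2
  noncrossing : ∀ i j : ZMod n, i ≠ j → {i, j} ∈ parts →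
    ∀ p ∈ parts, p.ncard = 2 →
      ¬ ∃ x ∈ p, ∃ y ∈ p, x ∈ cycInt n i j ∧ y ∈ cycInt n j i
  defects_one_side : ∀ i j : ZMod n, i ≠ j → {i, j} ∈ parts →
    (∀ p ∈ parts, p.ncard = 1 → p ⊆ cycInt n i j) ∨
    (∀ p ∈ parts, p.ncard = 1 → p ⊆ cycInt n j i)

/-- `T ⊆ ZMod n` is innermost: no two distinct elements `i ≠ j` of `T` satisfy
`i = j + 1`. -/
def Innermost (n : ℕ) (T : Set (ZMod n)) : Prop :=
  ∀ i ∈ T, ∀ j ∈ T, i ≠ j → i ≠ j + 1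

/-!
If `i` and `i + 1` both lie in `T`, then the parts `{i, i + 1}` and `{i + 1, i + 2}` share a point,
so they coincide and `2 = 0` in `ZMod n`. Conversely, for innermost `T` the pairs `{i, i + 1}` with
`i ∈ T` are disjoint, and all other points can be left as defects: one of the two cyclic intervals
cut out by `{i, i + 1}` is empty and the other is the complement of the pair, so nothing crosses the
pair and all defects lie on the same side of it.
-/

theorem cycInt_self_add_one {n : ℕ} (i : ZMod n) : cycInt n i (i + 1) = ∅ := by
  refine Set.eq_empty_of_forall_notMem ?_
  rintro x ⟨k, hk_pos, hk_lt, -⟩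
  rw [add_sub_cancel_left, ZMod.val_one_eq_one_mod] at hk_lt
  have := Nat.mod_le 1 n
  omega

theorem mem_cycInt_iff {n : ℕ} [NeZero n] {a b x : ZMod n} :
    x ∈ cycInt n a b ↔ x ≠ a ∧ (x - a).val < (b - a).val := by
  rw [← sub_ne_zero, ← ZMod.val_pos]
  constructor
  · rintro ⟨k, hk_pos, hk_lt, rfl⟩
    rw [add_sub_cancel_left, ZMod.val_cast_of_lt (hk_lt.trans (ZMod.val_lt _))]
    exact ⟨hk_pos, hk_lt⟩
  · rintro ⟨hx_pos, hx_lt⟩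
    exact ⟨_, hx_pos, hx_lt, by rw [ZMod.natCast_zmod_val, add_sub_cancel]⟩

theorem val_lt_val_neg_one_iff {n : ℕ} [NeZero n] {a : ZMod n} :
    a.val < (-1 : ZMod n).val ↔ a ≠ -1 := by
  obtain ⟨m, rfl⟩ := Nat.exists_eq_succ_of_ne_zero (NeZero.ne n)
  have ha : a.val ≤ (-1 : ZMod m.succ).val := by
    rw [ZMod.val_neg_one]
    exact Nat.le_of_lt_succ (ZMod.val_lt a)
  rw [ha.lt_iff_ne, (ZMod.val_injective m.succ).ne_iff]

theorem cycInt_add_one_self {n : ℕ} [NeZero n] (i : ZMod n) :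
    cycInt n (i + 1) i = {i, i + 1}ᶜ := by
  ext x
  have h_val : (x - (i + 1)).val < (i - (i + 1)).val ↔ x ≠ i := by
    rw [sub_add_cancel_left, val_lt_val_neg_one_iff, ← sub_sub, ne_eq, sub_eq_neg_self, sub_eq_zero]
  rw [mem_cycInt_iff, h_val, Set.mem_compl_iff, Set.mem_insert_iff, Set.mem_singleton_iff, not_or,
    and_comm]

theorem cycInt_of_pair_eq {n : ℕ} [NeZero n] {a b i : ZMod n}
    (h : ({a, b} : Set (ZMod n)) = {i, i + 1}) :
    cycInt n a b = ∅ ∧ cycInt n b a = {a, b}ᶜ ∨ cycInt n a b = {a, b}ᶜ ∧ cycInt n b a = ∅ := by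
  rw [h]
  obtain ⟨rfl, rfl⟩ | ⟨rfl, rfl⟩ := Set.pair_eq_pair_iff.mp h
  · exact Or.inl ⟨cycInt_self_add_one a, cycInt_add_one_self a⟩
  · exact Or.inr ⟨cycInt_add_one_self b, cycInt_self_add_one b⟩

namespace AnnularLinkState

theorem eq_of_mem_parts {n : ℕ} (p : AnnularLinkState n) {P Q : Set (ZMod n)} {x : ZMod n}
    (hP : P ∈ p.parts) (hQ : Q ∈ p.parts) (hxP : x ∈ P) (hxQ : x ∈ Q) : P = Q := by
  by_contra hPQ
  exact Set.disjoint_left.mp (p.parts_disjoint P hP Q hQ hPQ) hxP hxQ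

theorem innermost_of_forall_pair_mem_parts {n : ℕ} (p : AnnularLinkState n) {T : Set (ZMod n)}
    (h_two : (2 : ZMod n) ≠ 0) (hT : ∀ i ∈ T, {i, i + 1} ∈ p.parts) : Innermost n T := by
  rintro _ hj' j hj hne rfl
  have h_eq : ({j, j + 1} : Set (ZMod n)) = {j + 1, j + 1 + 1} :=
    p.eq_of_mem_parts (x := j + 1) (hT j hj) (hT _ hj') (by simp) (by simp)
  obtain ⟨h_one, -⟩ | ⟨h_add_two, -⟩ := Set.pair_eq_pair_iff.mp h_eq
  · exact hne h_one.symm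
  · rw [add_assoc, one_add_one_eq_two, left_eq_add] at h_add_two
    exact h_two h_add_two

/-- The annular link state given by a partition of `ZMod n` into singletons and pairs of cyclically
consecutive points `{i, i + 1}`. -/
def ofIsPartition {n : ℕ} [NeZero n] (c : Set (Set (ZMod n))) (hc : Setoid.IsPartition c)
    (h_parts : ∀ P ∈ c, (∃ x, P = {x}) ∨ ∃ i, P = {i, i + 1}) : AnnularLinkState n :=
  have pair_eq {a b : ZMod n} (hab : a ≠ b) (h : {a, b} ∈ c) :
      ∃ i, ({a, b} : Set (ZMod n)) = {i, i + 1} :=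
    (h_parts _ h).resolve_left fun ⟨_, hx⟩ => (Set.nontrivial_pair hab).ne_singleton hx
  { parts := c
    parts_nonempty := fun _ hP => Setoid.nonempty_of_mem_partition hc hP
    parts_disjoint := fun _ hP _ hQ hPQ => hc.pairwiseDisjoint hP hQ hPQ
    parts_cover := fun x => (hc.2 x).exists
    parts_card := by
      intro P hP
      obtain ⟨x, rfl⟩ | ⟨i, rfl⟩ := h_parts P hP
      · exact Or.inl (Set.ncard_singleton x)
      · obtain h_eq | h_ne := eq_or_ne i (i + 1)
        · exact Or.inl (by rw [← h_eq, Set.pair_eq_singleton, Set.ncard_singleton])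
        · exact Or.inr (Set.ncard_pair h_ne)
    noncrossing := by
      rintro a b hab h P - - ⟨x, -, y, -, hx, hy⟩
      obtain ⟨i, hi⟩ := pair_eq hab h
      obtain ⟨h_empty, -⟩ | ⟨-, h_empty⟩ := cycInt_of_pair_eq hi
      · exact h_empty.subset hx
      · exact h_empty.subset hy
    defects_one_side := by
      intro a b hab h
      have defect_subset_compl : ∀ P ∈ c, P.ncard = 1 → P ⊆ {a, b}ᶜ := by
        intro P hP hP_card
        refine Set.subset_compl_iff_disjoint_right.mpr (hc.pairwiseDisjoint hP h ?_)
        rintro rfl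
        rw [Set.ncard_pair hab] at hP_card
        omega
      obtain ⟨i, hi⟩ := pair_eq hab h
      obtain ⟨-, h_compl⟩ | ⟨h_compl, -⟩ := cycInt_of_pair_eq hi
      · exact Or.inr (h_compl ▸ defect_subset_compl)
      · exact Or.inl (h_compl ▸ defect_subset_compl) }

end AnnularLinkState

/-- The pairs `{i, i + 1}` with `i ∈ T`, together with the singletons of the points that lie in none
of these pairs. It is a partition when `T` is innermost. -/
def pairsAndDefects {n : ℕ} (T : Set (ZMod n)) : Set (Set (ZMod n)) :=
  {P | ∃ i ∈ T, P = {i, i + 1}} ∪ {P | ∃ x, x ∉ T ∧ x - 1 ∉ T ∧ P = {x}}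

namespace Innermost

variable {n : ℕ} {T : Set (ZMod n)}

theorem disjoint_pair_pair (hT : Innermost n T) {i j : ZMod n} (hi : i ∈ T) (hj : j ∈ T)
    (hij : i ≠ j) : Disjoint ({i, i + 1} : Set (ZMod n)) {j, j + 1} := by
  rw [Set.disjoint_left]
  rintro _ (rfl | rfl) (h | h)
  · exact hij h
  · exact hT _ hi j hj hij h
  · exact hT j hj i hi hij.symm h.symm
  · exact hij (add_right_cancel h)

theorem pairwiseDisjoint_pairsAndDefects (hT : Innermost n T) :
    (pairsAndDefects T).PairwiseDisjoint id := by
  refine Set.pairwiseDisjoint_union.mpr ⟨?_, ?_, ?_⟩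
  · rintro _ ⟨i, hi, rfl⟩ _ ⟨j, hj, rfl⟩ hne
    exact hT.disjoint_pair_pair hi hj fun hij => hne (by rw [hij])
  · rintro _ ⟨x, -, -, rfl⟩ _ ⟨y, -, -, rfl⟩ hne
    exact Set.disjoint_singleton.mpr fun hxy => hne (by rw [hxy])
  · rintro _ ⟨i, hi, rfl⟩ _ ⟨x, hx, hx_pred, rfl⟩ -
    refine Set.disjoint_singleton_right.mpr ?_
    rintro (rfl | rfl)
    · exact hx hi
    · exact hx_pred (by rwa [add_sub_cancel_right])

theorem isPartition_pairsAndDefects (hT : Innermost n T) :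
    Setoid.IsPartition (pairsAndDefects T) := by
  refine hT.pairwiseDisjoint_pairsAndDefects.isPartition_of_exists_of_ne_empty ?_ ?_
  · intro x
    by_cases hx : x ∈ T
    · exact ⟨_, Or.inl ⟨x, hx, rfl⟩, Set.mem_insert x _⟩
    by_cases hx_pred : x - 1 ∈ T
    · exact ⟨_, Or.inl ⟨x - 1, hx_pred, rfl⟩, Or.inr (sub_add_cancel x 1).symm⟩
    · exact ⟨_, Or.inr ⟨x, hx, hx_pred, rfl⟩, rfl⟩
  · rintro (⟨i, -, h⟩ | ⟨x, -, -, h⟩)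
    · exact (Set.insert_nonempty i _).ne_empty h.symm
    · exact Set.singleton_ne_empty x h.symm

theorem exists_annularLinkState [NeZero n] (hT : Innermost n T) :
    ∃ p : AnnularLinkState n, ∀ i ∈ T, {i, i + 1} ∈ p.parts := by
  refine ⟨.ofIsPartition (pairsAndDefects T) hT.isPartition_pairsAndDefects ?_,
    fun i hi => Or.inl ⟨i, hi, rfl⟩⟩
  rintro P (⟨i, -, hP⟩ | ⟨x, -, -, hP⟩)
  · exact Or.inr ⟨i, hP⟩
  · exact Or.inl ⟨x, hP⟩

end Innermost

/-- for `n ≥ 3` and `T ⊆ ZMod n`, there is an annular link state having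
`{i, i+1}` as a part for every `i ∈ T` if and only if `T` is innermost. -/
theorem stmt14 (n : ℕ) (hn : 3 ≤ n) (T : Set (ZMod n)) :
    (∃ p : AnnularLinkState n, ∀ i ∈ T, {i, i + 1} ∈ p.parts) ↔ Innermost n T := by
  have : NeZero n := ⟨by omega⟩
  have h_two : (2 : ZMod n) ≠ 0 := fun h =>
    absurd (Nat.le_of_dvd two_pos ((ZMod.natCast_eq_zero_iff 2 n).mp h)) (by omega)
  exact ⟨fun ⟨p, hp⟩ => p.innermost_of_forall_pair_mem_parts h_two hp,
    Innermost.exists_annularLinkState⟩
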